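/- The sequence (τ_n)_{n∈ℕ} is strictly increasing until reaching ∞, i.e. if τ_n < ∞ then τ_{n+1} > τ_n, and the sequence (τ_n) has no finite accumulation point. -/

import Mathlib

/-!
STATEMENT 0: For the sequence (τ_n) defined from a continuous path w (with w(0)=0) and a
displacement μ>0 by τ_0 = 0, τ_{n+1} = Γ_{τ_n} for n even, τ_{n+1} = Ψ_{τ_n} for n odd
(and τ_{n+1} = ∞ once τ_n = ∞), where
Γ_s = inf{t ≥ s : w(t) = w_*(s,t) + μ} and Ψ_s = inf{t ≥ s : w(t) = w^*(s,t) − μ}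
(with inf ∅ = ∞): the sequence is strictly increasing until reaching ∞, and has no finite
accumulation point.
-/

noncomputable section

open Set Filter Topology ENNReal

namespace LOB

/-- running maximum `w^*(s,t)` of `w` on `[s,t]`. -/
def wsup (w : ℝ → ℝ) (s t : ℝ) : ℝ := sSup (w '' Set.Icc s t)

/-- running minimum `w_*(s,t)` of `w` on `[s,t]`. -/
def winf (w : ℝ → ℝ) (s t : ℝ) : ℝ := sInf (w '' Set.Icc s t)

/-- `Γ_s = inf{t ≥ s : w(t) = w_*(s,t) + μ}`, with values in `ℝ≥0∞` and `inf ∅ = ∞`. -/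
def Gam (μ : ℝ) (w : ℝ → ℝ) (s : ℝ) : ℝ≥0∞ :=
  sInf {t : ℝ≥0∞ | ∃ r : ℝ, s ≤ r ∧ t = ENNReal.ofReal r ∧ w r = winf w s r + μ}

/-- `Ψ_s = inf{t ≥ s : w(t) = w^*(s,t) − μ}`, with values in `ℝ≥0∞` and `inf ∅ = ∞`. -/
def Psi (μ : ℝ) (w : ℝ → ℝ) (s : ℝ) : ℝ≥0∞ :=
  sInf {t : ℝ≥0∞ | ∃ r : ℝ, s ≤ r ∧ t = ENNReal.ofReal r ∧ w r = wsup w s r - μ}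

/-- the sequence `τ_0 = 0`, `τ_{n+1} = Γ_{τ_n}` (n even), `τ_{n+1} = Ψ_{τ_n}` (n odd),
with `τ_{n+1} = ∞` as soon as `τ_n = ∞`. -/
def tauSeq (μ : ℝ) (w : ℝ → ℝ) : ℕ → ℝ≥0∞
  | 0 => 0
  | n + 1 =>
    if tauSeq μ w n = ⊤ then ⊤
    else if Even n then Gam μ w (tauSeq μ w n).toReal
    else Psi μ w (tauSeq μ w n).toReal

end LOB

open LOB

/-- Uniform continuity gives a uniform lower bound on the length of each step. -/
lemma step_bound (μ : ℝ) (hμ : 0 < μ) (w : ℝ → ℝ) (hw : Continuous w) (T : ℝ) :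
    ∃ δ : ℝ, 0 < δ ∧ ∀ n : ℕ, tauSeq μ w n ≤ ENNReal.ofReal T →
      tauSeq μ w n + ENNReal.ofReal δ ≤ tauSeq μ w (n + 1) := by
  have huc : UniformContinuousOn w (Set.Icc 0 (max T 0 + 1)) :=
    isCompact_Icc.uniformContinuousOn_of_continuous hw.continuousOn
  obtain ⟨d, hd, hd'⟩ := Metric.uniformContinuousOn_iff.1 huc μ hμ
  refine ⟨min d 1, by positivity, ?_⟩
  intro n hn
  have hfin : tauSeq μ w n ≠ ⊤ := ne_top_of_le_ne_top ENNReal.ofReal_ne_top hn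
  have hs0 : 0 ≤ (tauSeq μ w n).toReal := ENNReal.toReal_nonneg
  have hsT : (tauSeq μ w n).toReal ≤ max T 0 := by
    have := ENNReal.toReal_mono ENNReal.ofReal_ne_top hn
    rwa [ENNReal.toReal_ofReal'] at this
  have heq : tauSeq μ w n = ENNReal.ofReal (tauSeq μ w n).toReal :=
    (ENNReal.ofReal_toReal hfin).symm
  have hstep : tauSeq μ w (n + 1) = if tauSeq μ w n = ⊤ then ⊤
    else if Even n then Gam μ w (tauSeq μ w n).toReal
    else Psi μ w (tauSeq μ w n).toReal := by rw [tauSeq]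
  rw [if_neg hfin] at hstep
  rw [hstep]
  generalize (tauSeq μ w n).toReal = s at *
  rw [heq, ← ENNReal.ofReal_add hs0 (by positivity)]
  have key : ∀ r x : ℝ, s ≤ r → x ∈ Set.Icc s r → r < s + min d 1 → |w r - w x| < μ := by
    intro r x hr hx hlt
    have h1 := min_le_left d 1
    have h2 := min_le_right d 1
    have := hd' r ⟨by linarith, by linarith⟩ x ⟨by linarith [hx.1], by linarith [hx.2]⟩
      (by rw [Real.dist_eq, abs_lt]; constructor <;> linarith [hx.1, hx.2])
    rwa [Real.dist_eq] at this
  split_ifs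
  · refine le_sInf ?_
    rintro _ ⟨r, hr, rfl, hwr⟩
    apply ENNReal.ofReal_le_ofReal
    by_contra! hlt
    obtain ⟨x, hx, hxe⟩ := (isCompact_Icc.image hw).sInf_mem
      ((Set.nonempty_Icc.2 hr).image w)
    have := abs_lt.1 (key r x hr hx hlt)
    unfold winf at hwr
    linarith [this.1, this.2]
  · refine le_sInf ?_
    rintro _ ⟨r, hr, rfl, hwr⟩
    apply ENNReal.ofReal_le_ofReal
    by_contra! hlt
    obtain ⟨x, hx, hxe⟩ := (isCompact_Icc.image hw).sSup_mem
      ((Set.nonempty_Icc.2 hr).image w)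
    have := abs_lt.1 (key r x hr hx hlt)
    unfold wsup at hwr
    linarith [this.1, this.2]

/-- The sequence `(τ_n)` is strictly increasing until reaching `∞`, and has no
finite accumulation point. -/
theorem tauSeq_strictMono_and_no_finite_accumulation
    (μ : ℝ) (hμ : 0 < μ) (w : ℝ → ℝ) (hw : Continuous w) (hw0 : w 0 = 0) :
    (∀ n : ℕ, tauSeq μ w n < ⊤ → tauSeq μ w n < tauSeq μ w (n + 1)) ∧
    (∀ t : ℝ≥0∞, t < ⊤ → ¬ MapClusterPt t Filter.atTop (tauSeq μ w)) := by
  have h1 : ∀ n : ℕ, tauSeq μ w n < ⊤ → tauSeq μ w n < tauSeq μ w (n + 1) := by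
    intro n hn
    obtain ⟨δ, hδ, h⟩ := step_bound μ hμ w hw (tauSeq μ w n).toReal
    refine lt_of_lt_of_le ?_ (h n (ENNReal.ofReal_toReal hn.ne).ge)
    exact ENNReal.lt_add_right hn.ne (by simpa using hδ)
  refine ⟨h1, ?_⟩
  have hmono : Monotone (tauSeq μ w) := by
    apply monotone_nat_of_le_succ
    intro n
    by_cases hn : tauSeq μ w n = ⊤
    · have : tauSeq μ w (n + 1) = ⊤ := by rw [tauSeq, if_pos hn]
      rw [this]; exact le_top
    · exact (h1 n (lt_top_iff_ne_top.2 hn)).le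
  intro t ht hcl
  have hlt : t < t + 1 := ENNReal.lt_add_right ht.ne one_ne_zero
  have hfr := hcl.frequently (Iio_mem_nhds hlt)
  have hall : ∀ n, tauSeq μ w n < t + 1 := by
    intro n
    obtain ⟨m, hm, hm'⟩ := Filter.frequently_atTop.1 hfr n
    exact (hmono hm).trans_lt hm'
  have hT : t + 1 ≠ ⊤ := ENNReal.add_ne_top.2 ⟨ht.ne, ENNReal.one_ne_top⟩
  obtain ⟨δ, hδ, h⟩ := step_bound μ hμ w hw (t + 1).toReal
  rw [ENNReal.ofReal_toReal hT] at h
  have hn : ∀ n : ℕ, (n : ℝ≥0∞) * ENNReal.ofReal δ ≤ tauSeq μ w n := by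
    intro n
    induction n with
    | zero => simp
    | succ k ih =>
      refine le_trans ?_ (h k (hall k).le)
      push_cast
      rw [add_mul, one_mul]
      gcongr
  obtain ⟨n, hn'⟩ := ENNReal.exists_nat_mul_gt (a := ENNReal.ofReal δ) (by simpa using hδ) hT
  exact absurd ((hn n).trans_lt (hall n)) hn'.le.not_gt
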